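/- Let M be a locally connected topological space and ≪ a transitive binary relation on M whose graph is open in M × M and which is future-dense and past-dense. Let (P_k)_{k∈ℕ} be a sequence of past sets (I⁻(P_k) = P_k) whose Hausdorff closed limit Π_∞ exists, and set F_k := M \ closure(P_k). Then the sequence (F_k) has a Hausdorff closed limit Φ_∞; setting P_∞ := interior(Π_∞), F_∞ := interior(Φ_∞) and A_∞ := ∂Π_∞, one has F_∞ = M \ Π_∞, P_∞ is a past set, F_∞ is a future set (I⁺(F_∞) = F_∞), M is the disjoint union of P_∞, A_∞ and F_∞, and ∂P_∞ = A_∞ = ∂F_∞. -/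

import Mathlib

/-!
Write `Π` for the limit of the past sets `P k`. If `x ≪ y` with `y ∈ Π`, then `I⁺(x)` is a
neighbourhood of `y`, hence meets `P k` for all large `k`, and so `x ∈ P k` for all large `k`
(`eventually_mem_of_rel`). Thus `I⁻(Π)` is an open subset of `Π`; past-density makes it dense
in `Π`, so the closed set `Π` is the closure of its interior.

The limit of the complements `F k` is `Φ = (interior Π)ᶜ = closure Πᶜ`. A point outside `Π` has a
neighbourhood eventually contained in `F k`, which puts `closure Πᶜ` inside the lower limit.
Conversely, a point `x` of `interior Π` has, by future-density applied twice, `x ≪ y ≪ z` with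
`z ∈ Π`; then `y ∈ P k` for all large `k`, and the single neighbourhood `I⁻(y)` of `x` lies in
`P k` for all those `k`, so `x` is outside the upper limit. The remaining claims follow from
`closure (interior Π) = Π` and `I⁻(Π) ⊆ interior Π`.
-/

/-- The Hausdorff upper limit of a sequence of subsets. -/
def hausdorffUpperLimit {M : Type*} [TopologicalSpace M] (S : ℕ → Set M) : Set M :=
  {p | ∀ U ∈ nhds p, {k : ℕ | (U ∩ S k).Nonempty}.Infinite}

/-- The Hausdorff lower limit of a sequence of subsets. -/
def hausdorffLowerLimit {M : Type*} [TopologicalSpace M] (S : ℕ → Set M) : Set M :=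
  {p | ∀ U ∈ nhds p, {k : ℕ | ¬ (U ∩ S k).Nonempty}.Finite}

/-- The timelike past of a set `S`: all points related to some point of `S`. -/
def Iminus {M : Type*} (r : M → M → Prop) (S : Set M) : Set M :=
  {x | ∃ s ∈ S, r x s}

/-- The timelike future of a set `S`: all points to which some point of `S` is related. -/
def Iplus {M : Type*} (r : M → M → Prop) (S : Set M) : Set M :=
  {y | ∃ s ∈ S, r s y}

open Filter Topology

theorem mem_upperLimit_iff {M : Type*} [TopologicalSpace M] {S : ℕ → Set M} {p : M} :
    p ∈ hausdorffUpperLimit S ↔ ∀ U ∈ 𝓝 p, ∃ᶠ k in atTop, (U ∩ S k).Nonempty := by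
  simp only [hausdorffUpperLimit, Set.mem_ofPred_eq, Nat.frequently_atTop_iff_infinite]

theorem mem_lowerLimit_iff {M : Type*} [TopologicalSpace M] {S : ℕ → Set M} {p : M} :
    p ∈ hausdorffLowerLimit S ↔ ∀ U ∈ 𝓝 p, ∀ᶠ k in atTop, (U ∩ S k).Nonempty := by
  simp only [hausdorffLowerLimit, Set.mem_ofPred_eq, ← Nat.cofinite_eq_atTop, eventually_cofinite]

theorem lowerLimit_subset_upperLimit {M : Type*} [TopologicalSpace M] (S : ℕ → Set M) :
    hausdorffLowerLimit S ⊆ hausdorffUpperLimit S := fun _ hp =>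
  mem_upperLimit_iff.2 fun U hU => (mem_lowerLimit_iff.1 hp U hU).frequently

theorem isClosed_lowerLimit {M : Type*} [TopologicalSpace M] (S : ℕ → Set M) :
    IsClosed (hausdorffLowerLimit S) := by
  refine isClosed_of_closure_subset fun p hp => mem_lowerLimit_iff.2 fun U hU => ?_
  obtain ⟨q, hqU, hq⟩ := mem_closure_iff_nhds.1 hp _ (interior_mem_nhds.2 hU)
  exact mem_lowerLimit_iff.1 hq U (mem_interior_iff_mem_nhds.1 hqU)

section Relation

variable {M : Type*} [TopologicalSpace M] {r : M → M → Prop}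

theorem isOpen_future (hopen : IsOpen {p : M × M | r p.1 p.2}) (x : M) : IsOpen {y | r x y} :=
  hopen.preimage (Continuous.prodMk_right x)

theorem isOpen_past (hopen : IsOpen {p : M × M | r p.1 p.2}) (y : M) : IsOpen {x | r x y} :=
  hopen.preimage (Continuous.prodMk_left y)

theorem isOpen_Iminus (hopen : IsOpen {p : M × M | r p.1 p.2}) (S : Set M) :
    IsOpen (Iminus r S) := by
  have h : Iminus r S = ⋃ s ∈ S, {x | r x s} := by
    ext x
    simp [Iminus]
  rw [h]
  exact isOpen_biUnion fun s _ => isOpen_past hopen s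

/-- A point in the past of the lower limit lies in all but finitely many of the past sets, not
merely arbitrarily close to them. -/
theorem eventually_mem_of_rel (hopen : IsOpen {p : M × M | r p.1 p.2})
    {P : ℕ → Set M} (hP : ∀ k, Iminus r (P k) = P k) {x y : M}
    (hy : y ∈ hausdorffLowerLimit P) (hxy : r x y) : ∀ᶠ k in atTop, x ∈ P k := by
  filter_upwards [mem_lowerLimit_iff.1 hy _ ((isOpen_future hopen x).mem_nhds hxy)] with k hk
  obtain ⟨z, hxz, hz⟩ := hk
  exact hP k ▸ ⟨z, hz, hxz⟩

end Relation

theorem hausdorffLimit_pasts_futures {M : Type*} [TopologicalSpace M]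
    [LocallyConnectedSpace M]
    (r : M → M → Prop)
    (htrans : Transitive r)
    (hopen : IsOpen {p : M × M | r p.1 p.2})
    (hfd : ∀ x : M, x ∈ closure {y | r x y})
    (hpd : ∀ x : M, x ∈ closure {y | r y x})
    (P : ℕ → Set M) (hP : ∀ k, Iminus r (P k) = P k)
    (PiInf : Set M)
    (hup : hausdorffUpperLimit P = PiInf) (hlow : hausdorffLowerLimit P = PiInf)
    (F : ℕ → Set M) (hF : ∀ k, F k = (closure (P k))ᶜ) :
    ∃ PhiInf : Set M,
      hausdorffUpperLimit F = PhiInf ∧ hausdorffLowerLimit F = PhiInf ∧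
      interior PhiInf = PiInfᶜ ∧
      Iminus r (interior PiInf) = interior PiInf ∧
      Iplus r (interior PhiInf) = interior PhiInf ∧
      interior PiInf ∪ frontier PiInf ∪ interior PhiInf = Set.univ ∧
      Disjoint (interior PiInf) (frontier PiInf) ∧
      Disjoint (interior PiInf) (interior PhiInf) ∧
      Disjoint (frontier PiInf) (interior PhiInf) ∧
      frontier (interior PiInf) = frontier PiInf ∧
      frontier (interior PhiInf) = frontier PiInf := by
  have hclosed : IsClosed PiInf := hlow ▸ isClosed_lowerLimit P
  have hpast : Iminus r PiInf ⊆ PiInf := by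
    rintro x ⟨y, hy, hxy⟩
    rw [← hlow] at hy ⊢
    refine mem_lowerLimit_iff.2 fun U hU => ?_
    filter_upwards [eventually_mem_of_rel hopen hP hy hxy] with k hk
    exact ⟨x, mem_of_mem_nhds hU, hk⟩
  have hpastInt : Iminus r PiInf ⊆ interior PiInf :=
    interior_maximal hpast (isOpen_Iminus hopen _)
  have hregular : closure (interior PiInf) = PiInf := by
    refine (closure_minimal interior_subset hclosed).antisymm fun x hx => ?_
    exact closure_mono (fun y hy => hpastInt ⟨x, hx, hy⟩) (hpd x)
  have hfuture : ∀ x ∈ interior PiInf, ∃ y ∈ interior PiInf, r x y := fun x hx =>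
    mem_closure_iff.1 (hfd x) _ isOpen_interior hx
  have hF_lower : (interior PiInf)ᶜ ⊆ hausdorffLowerLimit F := by
    rw [← closure_compl]
    refine closure_minimal (fun x hx => ?_) (isClosed_lowerLimit F)
    rw [← hup, Set.mem_compl_iff, mem_upperLimit_iff] at hx
    push Not at hx
    obtain ⟨U, hU, hUP⟩ := hx
    refine mem_lowerLimit_iff.2 fun V hV => ?_
    filter_upwards [hUP] with k hk
    refine ⟨x, mem_of_mem_nhds hV, ?_⟩
    rw [hF k]
    intro hxk
    obtain ⟨z, hz⟩ := mem_closure_iff_nhds.1 hxk U hU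
    exact (hk ▸ hz : z ∈ (∅ : Set M))
  have hF_upper : hausdorffUpperLimit F ⊆ (interior PiInf)ᶜ := by
    intro x hx hxi
    obtain ⟨y, hy, hxy⟩ := hfuture x hxi
    obtain ⟨z, hz, hyz⟩ := hfuture y hy
    have hev := eventually_mem_of_rel hopen hP (hlow ▸ interior_subset hz) hyz
    have hfreq := mem_upperLimit_iff.1 hx _ ((isOpen_past hopen y).mem_nhds hxy)
    obtain ⟨k, ⟨w, hwy, hwF⟩, hyk⟩ := (hfreq.and_eventually hev).exists
    rw [hF k] at hwF
    exact hwF (subset_closure (hP k ▸ ⟨y, hyk, hwy⟩))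
  have hle := lowerLimit_subset_upperLimit F
  have hint : interior (interior PiInf)ᶜ = PiInfᶜ := by rw [interior_compl, hregular]
  refine ⟨(interior PiInf)ᶜ, hF_upper.antisymm (hF_lower.trans hle),
    (hle.trans hF_upper).antisymm hF_lower, hint, ?_, ?_, ?_, ?_, ?_, ?_, ?_, ?_⟩
  · refine Set.Subset.antisymm ?_ hfuture
    rintro x ⟨y, hy, hxy⟩
    exact hpastInt ⟨y, interior_subset hy, hxy⟩
  · rw [hint]
    refine Set.Subset.antisymm ?_ fun x hx => ?_
    · rintro y ⟨x, hx, hxy⟩ hy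
      exact hx (hpast ⟨y, hy, hxy⟩)
    · obtain ⟨y, hy, hyx⟩ := mem_closure_iff.1 (hpd x) _ hclosed.isOpen_compl hx
      exact ⟨y, hy, hyx⟩
  · rw [hint, ← closure_eq_interior_union_frontier, hclosed.closure_eq, Set.union_compl_self]
  · exact disjoint_interior_frontier
  · rw [hint]
    exact Set.disjoint_compl_right_iff_subset.2 interior_subset
  · rw [hint]
    exact Set.disjoint_compl_right_iff_subset.2 hclosed.frontier_subset
  · rw [frontier, hregular, interior_interior, hclosed.frontier_eq]
  · rw [hint, frontier_compl]
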